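/- arXiv:2512.01900 — 2 statements merged into one kernel-verified Lean document; each statement's English description precedes it below -/
import Mathlib

section
/- Let p be a nice pattern, i.e., a pattern in which every vector other than its zero vector z is a unit vector e_i for some i ∈ {1,…,k}. Let p' be the pattern obtained from p by reducing, for each i ∈ {1,…,k}, the multiplicity of e_i by max(0, tot_i(p) − 2), where tot_i(p) = Σ_{v ∈ p} v_i (summed with multiplicity); thus p' is a nice pattern with the same zero vector and tot_i(p') = min(2, tot_i(p)) for all i ∈ {1,…,k}. Then the canonical forests F_p and F_{p'} are equivalent: for every extension datum d, Glue(F_p; d) is acyclic if and only if Glue(F_{p'}; d) is acyclic. -/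
/-- A `k`-labeled graph: a finite simple graph whose vertices are labeled with
labels in `{0, 1, …, k}`. -/
structure LGraph (k : ℕ) where
  V : Type
  fintype : Fintype V
  G : SimpleGraph V
  lab : V → Fin (k + 1)

/-- An extension datum `d = (H₀, J, L)`: a finite simple forest `H₀` on a vertex set `W`,
a symmetric irreflexive relation `J` on the labels `{1, …, k}`, and a map assigning to each
vertex of `W` a set of labels in `{1, …, k}`. -/
structure ExtDatum (k : ℕ) where
  W : Type
  finW : Finite W
  H0 : SimpleGraph W
  H0acyc : H0.IsAcyclic
  J : Fin (k + 1) → Fin (k + 1) → Prop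
  Jsymm : ∀ i j, J i j → J j i
  Jirrefl : ∀ i, ¬ J i i
  Jpos : ∀ i j, J i j → i ≠ 0 ∧ j ≠ 0
  L : W → Set (Fin (k + 1))
  Lpos : ∀ w, (0 : Fin (k + 1)) ∉ L w

/-- The glueing `Glue(F; d)` of a labeled graph `F` with an extension datum `d`. -/
def glue {k : ℕ} (F : LGraph k) (d : ExtDatum k) : SimpleGraph (F.V ⊕ d.W) :=
  SimpleGraph.fromRel fun x y =>
    match x, y with
    | Sum.inl u, Sum.inl v => F.G.Adj u v ∨ d.J (F.lab u) (F.lab v)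
    | Sum.inl u, Sum.inr w => F.lab u ∈ d.L w
    | Sum.inr w, Sum.inr w' => d.H0.Adj w w'
    | _, _ => False

/-- The type `labv(D)` of a set of vertices: the number of vertices of each label, capped at 2. -/
noncomputable def labv {k : ℕ} (F : LGraph k) (D : Set F.V) : Fin (k + 1) → ℕ :=
  fun j => min 2 (Set.ncard {v | v ∈ D ∧ F.lab v = j})

/-- Cap all multiplicities of a multiset at 2. -/
def cap2 {α : Type*} [DecidableEq α] (m : Multiset α) : Multiset α :=
  m.toFinset.val.bind fun a => Multiset.replicate (min 2 (m.count a)) a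

/-- The pattern `pat(F)` of a labeled graph: the multiset of types of its connected
components, with multiplicities capped at 2. -/
noncomputable def patLG {k : ℕ} (F : LGraph k) : Multiset (Fin (k + 1) → ℕ) :=
  haveI := F.fintype
  haveI : Fintype F.G.ConnectedComponent := Fintype.ofFinite _
  cap2 ((Finset.univ : Finset F.G.ConnectedComponent).val.map fun D => labv F D.supp)

/-- The list of labels of the canonical path associated to a vector `v`:
`v j` vertices labeled `j`, in a fixed order. -/
def pathLabels (k : ℕ) (v : Fin (k + 1) → ℕ) : List (Fin (k + 1)) :=
  (List.finRange (k + 1)).flatMap fun j => List.replicate (v j) j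

/-- The canonical forest `F_p` of a pattern `p`: one disjoint simple path for each vector
of `p` (with multiplicity), the path for `v` having exactly `v j` vertices labeled `j`. -/
noncomputable def canonForest (k : ℕ) (p : Multiset (Fin (k + 1) → ℕ)) : LGraph k where
  V := Σ i : Fin p.toList.length, Fin ((pathLabels k (p.toList.get i)).length)
  fintype := inferInstance
  G := SimpleGraph.fromRel fun a b => a.1 = b.1 ∧ a.2.val + 1 = b.2.val
  lab := fun a => (pathLabels k (p.toList.get a.1)).get a.2

/-- A multiset of vectors is a pattern if every vector has entries at most 2, every vector
has multiplicity at most 2, and there is exactly one vector `z` (its zero vector, of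
multiplicity 1) with `z 0 = 1`, all other vectors `v` having `v 0 = 0`. -/
def IsPattern (k : ℕ) (p : Multiset (Fin (k + 1) → ℕ)) : Prop :=
  (∀ v ∈ p, ∀ j, v j ≤ 2) ∧ (∀ v, p.count v ≤ 2) ∧
    ∃ z ∈ p, p.count z = 1 ∧ z 0 = 1 ∧ ∀ v ∈ p, v ≠ z → v 0 = 0

/-- Two labeled forests are equivalent if gluing with any extension datum gives an acyclic
graph for one iff it does for the other. -/
def EquivLF {k : ℕ} (F₁ F₂ : LGraph k) : Prop :=
  ∀ d : ExtDatum k, (glue F₁ d).IsAcyclic ↔ (glue F₂ d).IsAcyclic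

/-- The two-sum of two vectors: coordinatewise sum capped at 2. -/
def twoSum {k : ℕ} (u v : Fin (k + 1) → ℕ) : Fin (k + 1) → ℕ := fun j => min 2 (u j + v j)

/-- The unit vector `e_i`. -/
def unitVec (k : ℕ) (i : Fin (k + 1)) : Fin (k + 1) → ℕ := fun j => if j = i then 1 else 0

/-- `tot_i(p) = Σ_{v ∈ p} v i` (with multiplicity). -/
def tot {k : ℕ} (p : Multiset (Fin (k + 1) → ℕ)) (i : Fin (k + 1)) : ℕ :=
  (p.map fun v => v i).sum

/-!
A path consisting of one vertex labeled `i` contributes an isolated vertex `x` to the forest. In any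
glueing, all neighbors of `x` are prescribed by its label, so they are neighbors of every other
vertex labeled `i`. If at least two such vertices `a`, `b` remain after deleting `x`, two distinct
neighbors of `x` would already close a 4-cycle with `a` and `b`; hence in the acyclic case `x` has
degree at most one and its deletion does not matter. The surplus copies of `e_i` are
deleted one at a time in this way, since what is left always has at least two vertices labeled `i`.
-/

section Acyclic

variable {V : Type*} {G : SimpleGraph V}

theorem eq_of_isAcyclic_of_adj_of_adj (hG : G.IsAcyclic) {a b y y' : V} (hab : a ≠ b)
    (hay : G.Adj a y) (hby : G.Adj b y) (hay' : G.Adj a y') (hby' : G.Adj b y') : y = y' := by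
  let pathVia (c : V) (hac : G.Adj a c) (hbc : G.Adj b c) : G.Path a b :=
    ⟨.cons hac (.cons hbc.symm .nil), by simp [hac.ne, hbc.ne', hab]⟩
  have hpath : pathVia y hay hby = pathVia y' hay' hby' := (hG.subsingleton_path a b).elim _ _
  exact congrArg (fun q : G.Path a b => q.1.snd) hpath

theorem isAcyclic_of_induce_compl_singleton {x : V} (hx : (G.neighborSet x).Subsingleton)
    (hG : (G.induce {x}ᶜ).IsAcyclic) : G.IsAcyclic := by
  classical
  intro u c hc
  by_cases hxc : x ∈ c.support
  · have hrot := hc.rotate hxc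
    exact hrot.snd_ne_penultimate
      (hx (SimpleGraph.Walk.adj_snd hrot.not_nil)
        (SimpleGraph.Walk.adj_penultimate hrot.not_nil).symm)
  · have hsupp : ∀ w ∈ c.support, w ∈ ({x}ᶜ : Set V) := fun w hw hwx => hxc (hwx ▸ hw)
    rw [← SimpleGraph.Walk.map_induce c hsupp] at hc
    exact hG _ ((SimpleGraph.Walk.isCycle_map_iff_of_injective Subtype.val_injective).1 hc)

theorem isAcyclic_iff_induce_compl_singleton {x a b : V} (hax : a ≠ x) (hbx : b ≠ x) (hab : a ≠ b)
    (ha : G.neighborSet x ⊆ G.neighborSet a) (hb : G.neighborSet x ⊆ G.neighborSet b) :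
    G.IsAcyclic ↔ (G.induce {x}ᶜ).IsAcyclic := by
  refine ⟨fun hG => hG.induce _, fun hG => isAcyclic_of_induce_compl_singleton ?_ hG⟩
  intro y hy y' hy'
  have heq : (⟨y, hy.ne'⟩ : ({x}ᶜ : Set V)) = ⟨y', hy'.ne'⟩ :=
    eq_of_isAcyclic_of_adj_of_adj hG (a := ⟨a, hax⟩) (b := ⟨b, hbx⟩)
      (fun h => hab (congrArg Subtype.val h)) (ha hy) (hb hy) (ha hy') (hb hy')
  exact congrArg Subtype.val heq

end Acyclic

section Fintype

variable {ι κ α : Type*} [Fintype ι]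

theorem exists_equiv_comp_eq_of_map_univ_eq [Fintype κ] {f : ι → α} {g : κ → α}
    (h : Finset.univ.val.map f = Finset.univ.val.map g) : ∃ e : ι ≃ κ, g ∘ e = f := by
  classical
  have hfiber (c : α) : Nonempty ({j // f j = c} ≃ {j // g j = c}) := by
    have hcount := congrArg (Multiset.count c) h
    simp only [Multiset.count_map, eq_comm (a := c)] at hcount
    rw [← Fintype.card_eq, Fintype.card_subtype, Fintype.card_subtype]
    exact hcount
  let fiberEquiv (c : α) : {j // f j = c} ≃ {j // g j = c} := (hfiber c).some
  exact ⟨Equiv.ofFiberEquiv fiberEquiv, funext (Equiv.ofFiberEquiv_map fiberEquiv)⟩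

theorem map_univ_val_get (l : List α) : Finset.univ.val.map l.get = (l : Multiset α) := by
  simp

theorem map_univ_val_option_elim (a : α) (f : ι → α) :
    Finset.univ.val.map (fun o : Option ι => o.elim a f) = a ::ₘ Finset.univ.val.map f := by
  have huniv : (Finset.univ : Finset (Option ι)).val = none ::ₘ Finset.univ.val.map some := rfl
  rw [huniv, Multiset.map_cons, Multiset.map_map]
  rfl

theorem card_filter_get_eq [DecidableEq α] (l : List α) (c : α) :
    (Finset.univ.filter fun t : Fin l.length => l.get t = c).card = l.count c := by
  rw [← Multiset.coe_count, ← map_univ_val_get l, Multiset.count_map]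
  simp only [eq_comm (a := c)]
  rfl

theorem card_filter_sigma_get_eq [DecidableEq α] (ℓ : ι → List α) (c : α) :
    (Finset.univ.filter fun a : Σ j, Fin (ℓ j).length => (ℓ a.1).get a.2 = c).card =
      ∑ j, (ℓ j).count c := by
  simp only [Finset.card_filter, Fintype.sum_sigma, ← card_filter_get_eq]

end Fintype

section Glue

variable {k : ℕ} {F F₁ F₂ F₃ : LGraph k} {d : ExtDatum k}

theorem EquivLF.trans (h₁₂ : EquivLF F₁ F₂) (h₂₃ : EquivLF F₂ F₃) : EquivLF F₁ F₃ :=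
  fun d => (h₁₂ d).trans (h₂₃ d)

theorem glue_adj_inl_inl {u v : F.V} :
    (glue F d).Adj (Sum.inl u) (Sum.inl v) ↔ F.G.Adj u v ∨ d.J (F.lab u) (F.lab v) := by
  have hne : F.G.Adj u v ∨ d.J (F.lab u) (F.lab v) → u ≠ v := by
    rintro (hadj | hJ) rfl
    exacts [hadj.ne rfl, d.Jirrefl _ hJ]
  have hJ : d.J (F.lab v) (F.lab u) ↔ d.J (F.lab u) (F.lab v) := ⟨d.Jsymm _ _, d.Jsymm _ _⟩
  simpa [glue, F.G.adj_comm v u, hJ] using hne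

theorem glue_adj_inl_inr {u : F.V} {w : d.W} :
    (glue F d).Adj (Sum.inl u) (Sum.inr w) ↔ F.lab u ∈ d.L w := by
  simp [glue]

theorem glue_adj_inr_inr {w w' : d.W} :
    (glue F d).Adj (Sum.inr w) (Sum.inr w') ↔ d.H0.Adj w w' := by
  simpa [glue, d.H0.adj_comm w' w] using SimpleGraph.Adj.ne

/-- The embedding of glueings with `d` induced by a label-preserving embedding of labeled graphs;
it fixes the vertices of `d`. -/
def glueEmbedding (f : F₁.G ↪g F₂.G) (hf : ∀ v, F₂.lab (f v) = F₁.lab v) (d : ExtDatum k) :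
    glue F₁ d ↪g glue F₂ d where
  toFun := Sum.map f id
  inj' := Sum.map_injective.2 ⟨f.injective, Function.injective_id⟩
  map_rel_iff' := by
    rintro (u | w) (v | w')
    · simp [glue_adj_inl_inl, hf]
    · simp [glue_adj_inl_inr, hf]
    · simp [SimpleGraph.adj_comm _ (Sum.inr w), glue_adj_inl_inr, hf]
    · simp [glue_adj_inr_inr]

theorem range_glueEmbedding (f : F₁.G ↪g F₂.G) (hf : ∀ v, F₂.lab (f v) = F₁.lab v)
    {x : F₂.V} (hx : Set.range f = {x}ᶜ) :
    Set.range (glueEmbedding f hf d) = {Sum.inl x}ᶜ := by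
  ext (y | w)
  · simpa [glueEmbedding] using Set.ext_iff.1 hx y
  · simp [glueEmbedding]

theorem neighborSet_glue_subset_of_isolated {x u : F.V} (hx : ∀ y, ¬ F.G.Adj x y)
    (hu : F.lab u = F.lab x) :
    (glue F d).neighborSet (Sum.inl x) ⊆ (glue F d).neighborSet (Sum.inl u) := by
  rintro (y | w) hy
  · exact glue_adj_inl_inl.2 (.inr (hu ▸ (glue_adj_inl_inl.1 hy).resolve_left (hx y)))
  · exact glue_adj_inl_inr.2 (hu ▸ glue_adj_inl_inr.1 hy)

theorem equivLF_of_isolated (f : F₁.G ↪g F₂.G) (hf : ∀ v, F₂.lab (f v) = F₁.lab v)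
    {x : F₂.V} (hrange : Set.range f = {x}ᶜ) (hx : ∀ y, ¬ F₂.G.Adj x y) {a b : F₁.V} (hab : a ≠ b)
    (ha : F₁.lab a = F₂.lab x) (hb : F₁.lab b = F₂.lab x) : EquivLF F₂ F₁ := by
  intro d
  have hne (v : F₁.V) : f v ≠ x := hrange.subset ⟨v, rfl⟩
  rw [isAcyclic_iff_induce_compl_singleton (a := Sum.inl (f a)) (b := Sum.inl (f b))
      (Sum.inl_injective.ne (hne a)) (Sum.inl_injective.ne (hne b))
      (Sum.inl_injective.ne (f.injective.ne hab))
      (neighborSet_glue_subset_of_isolated hx ((hf a).trans ha))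
      (neighborSet_glue_subset_of_isolated hx ((hf b).trans hb)),
    ← range_glueEmbedding f hf hrange]
  exact (glueEmbedding f hf d).isoInduceRange.isAcyclic_iff.symm

end Glue

section PathForest

variable {k : ℕ} {ι κ : Type} [Fintype ι] [Fintype κ]

/-- The disjoint union of simple paths, the path with index `j` carrying the labels `ℓ j` in this
order. Unlike `canonForest` it allows an arbitrary index type, so that no enumeration of a multiset
has to be fixed. -/
def pathForest (ℓ : ι → List (Fin (k + 1))) : LGraph k where
  V := Σ j, Fin (ℓ j).length
  fintype := inferInstance
  G := SimpleGraph.fromRel fun a b => a.1 = b.1 ∧ a.2.val + 1 = b.2.val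
  lab := fun a => (ℓ a.1).get a.2

theorem canonForest_eq_pathForest (p : Multiset (Fin (k + 1) → ℕ)) :
    canonForest k p = pathForest fun j => pathLabels k (p.toList.get j) :=
  rfl

theorem pathForest_adj {ℓ : ι → List (Fin (k + 1))} {a b : (pathForest ℓ).V} :
    (pathForest ℓ).G.Adj a b ↔
      a.1 = b.1 ∧ (a.2.val + 1 = b.2.val ∨ b.2.val + 1 = a.2.val) := by
  refine (SimpleGraph.fromRel_adj _ a b).trans ⟨?_, ?_⟩
  · rintro ⟨-, ⟨hfst, hsucc⟩ | ⟨hfst, hsucc⟩⟩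
    exacts [⟨hfst, .inl hsucc⟩, ⟨hfst.symm, .inr hsucc⟩]
  · rintro ⟨hfst, hsucc⟩
    refine ⟨?_, hsucc.imp (.intro hfst) (.intro hfst.symm)⟩
    rintro rfl
    omega

/-- The inclusion of the subforest formed by the paths whose indices lie in the range of `e`. -/
def pathForestEmbedding (e : ι ↪ κ) (ℓ : κ → List (Fin (k + 1))) :
    (pathForest (ℓ ∘ e)).G ↪g (pathForest ℓ).G where
  toEmbedding := e.sigmaMap fun _ => .refl _
  map_rel_iff' {a b} := by
    rw [pathForest_adj, pathForest_adj]
    exact and_congr_left' (e.apply_eq_iff_eq a.1 b.1)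

theorem equivLF_pathForest_comp (e : ι ≃ κ) (ℓ : κ → List (Fin (k + 1))) :
    EquivLF (pathForest (ℓ ∘ e)) (pathForest ℓ) := by
  intro d
  constructor
  · have hcomp : ℓ = (ℓ ∘ e) ∘ e.symm.toEmbedding := by ext1; simp
    conv_rhs => rw [hcomp]
    exact .embedding
      (glueEmbedding (pathForestEmbedding e.symm.toEmbedding (ℓ ∘ e)) (fun _ => rfl) d)
  · exact .embedding (glueEmbedding (pathForestEmbedding e.toEmbedding ℓ) (fun _ => rfl) d)

theorem equivLF_pathForest_of_map_univ_eq {ℓ : ι → List (Fin (k + 1))}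
    {ℓ' : κ → List (Fin (k + 1))} (h : Finset.univ.val.map ℓ = Finset.univ.val.map ℓ') :
    EquivLF (pathForest ℓ) (pathForest ℓ') := by
  obtain ⟨e, rfl⟩ := exists_equiv_comp_eq_of_map_univ_eq h
  exact equivLF_pathForest_comp e ℓ'

theorem exists_ne_lab_pathForest_eq {ℓ : ι → List (Fin (k + 1))} {i : Fin (k + 1)}
    (h : 2 ≤ ∑ j, (ℓ j).count i) :
    ∃ a b : (pathForest ℓ).V, a ≠ b ∧ (pathForest ℓ).lab a = i ∧ (pathForest ℓ).lab b = i := by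
  rw [← card_filter_sigma_get_eq] at h
  obtain ⟨a, ha, b, hb, hab⟩ := Finset.one_lt_card.1 h
  exact ⟨a, b, hab, (Finset.mem_filter.1 ha).2, (Finset.mem_filter.1 hb).2⟩

theorem equivLF_pathForest_elim_singleton {ℓ : ι → List (Fin (k + 1))} {i : Fin (k + 1)}
    (h : 2 ≤ ∑ j, (ℓ j).count i) :
    EquivLF (pathForest fun o : Option ι => o.elim [i] ℓ) (pathForest ℓ) := by
  obtain ⟨a, b, hab, ha, hb⟩ := exists_ne_lab_pathForest_eq h
  let x : (pathForest fun o : Option ι => o.elim [i] ℓ).V := ⟨none, (0 : Fin 1)⟩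
  have eq_x : ∀ y : (pathForest fun o : Option ι => o.elim [i] ℓ).V, y.1 = none → y = x := by
    rintro ⟨_, t⟩ rfl
    exact congrArg (Sigma.mk none) (Subsingleton.elim (α := Fin 1) t 0)
  have hx (y) : ¬ (pathForest fun o : Option ι => o.elim [i] ℓ).G.Adj x y := fun hadj =>
    hadj.ne (eq_x y (pathForest_adj.1 hadj).1.symm).symm
  let f := pathForestEmbedding Function.Embedding.some fun o : Option ι => o.elim [i] ℓ
  have hrange : Set.range f = {x}ᶜ := by
    ext y
    constructor
    · rintro ⟨v, rfl⟩ hv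
      exact Option.some_ne_none v.1 (congrArg Sigma.fst hv)
    · obtain ⟨_ | j, t⟩ := y
      · exact fun hy => absurd (eq_x _ rfl) hy
      · exact fun _ => ⟨⟨j, t⟩, rfl⟩
  exact equivLF_of_isolated f (fun _ => rfl) hrange hx hab ha hb

end PathForest

section CanonForest

variable {k : ℕ}

theorem count_pathLabels (v : Fin (k + 1) → ℕ) (i : Fin (k + 1)) :
    (pathLabels k v).count i = v i := by
  have hcount (j : Fin (k + 1)) : (List.replicate (v j) j).count i = if j = i then v j else 0 := by
    simp [List.count_replicate]
  simp only [pathLabels, List.count_flatMap, Function.comp_def, hcount, ← List.ofFn_eq_map,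
    List.sum_ofFn, Finset.sum_ite_eq', Finset.mem_univ, if_true]

theorem pathLabels_unitVec (i : Fin (k + 1)) : pathLabels k (unitVec k i) = [i] := by
  rw [← List.perm_singleton, List.perm_iff_count]
  intro j
  simp [count_pathLabels, unitVec, List.count_singleton, eq_comm (a := j)]

theorem sum_count_pathLabels_get_toList (q : Multiset (Fin (k + 1) → ℕ)) (i : Fin (k + 1)) :
    ∑ j, (pathLabels k (q.toList.get j)).count i = tot q i := by
  simp only [count_pathLabels]
  rw [tot, ← Multiset.sum_map_toList]
  exact Fin.sum_univ_fun_getElem q.toList fun v => v i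

theorem map_univ_pathLabels_get_toList (p : Multiset (Fin (k + 1) → ℕ)) :
    Finset.univ.val.map (fun j => pathLabels k (p.toList.get j)) = p.map (pathLabels k) := by
  have h := map_univ_val_get p.toList
  rw [Multiset.coe_toList] at h
  conv_rhs => rw [← h, Multiset.map_map]
  rfl

theorem equivLF_canonForest_unitVec_cons {q : Multiset (Fin (k + 1) → ℕ)} {i : Fin (k + 1)}
    (h : 2 ≤ tot q i) : EquivLF (canonForest k (unitVec k i ::ₘ q)) (canonForest k q) := by
  rw [← sum_count_pathLabels_get_toList] at h
  rw [canonForest_eq_pathForest, canonForest_eq_pathForest]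
  refine EquivLF.trans (equivLF_pathForest_of_map_univ_eq ?_)
    (equivLF_pathForest_elim_singleton h)
  rw [map_univ_pathLabels_get_toList, Multiset.map_cons, pathLabels_unitVec,
    ← map_univ_pathLabels_get_toList, map_univ_val_option_elim]

theorem tot_add (p q : Multiset (Fin (k + 1) → ℕ)) (i : Fin (k + 1)) :
    tot (p + q) i = tot p i + tot q i := by
  simp [tot]

theorem tot_mono {p q : Multiset (Fin (k + 1) → ℕ)} (h : p ≤ q) (i : Fin (k + 1)) :
    tot p i ≤ tot q i := by
  obtain ⟨r, rfl⟩ := Multiset.le_iff_exists_add.1 h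
  exact (tot_add p r i).symm ▸ Nat.le_add_right _ _

theorem equivLF_canonForest_unitVecs_add {q r : Multiset (Fin (k + 1) → ℕ)}
    (h : ∀ v ∈ r, ∃ i, v = unitVec k i ∧ 2 ≤ tot q i) :
    EquivLF (canonForest k (r + q)) (canonForest k q) := by
  induction r using Multiset.induction_on with
  | empty => exact fun d => by rw [zero_add]
  | cons v r ih =>
    obtain ⟨i, rfl, hi⟩ := h v (Multiset.mem_cons_self v r)
    rw [Multiset.cons_add]
    have htot : 2 ≤ tot (r + q) i := hi.trans (tot_mono (Multiset.le_add_left q r) i)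
    exact (equivLF_canonForest_unitVec_cons htot).trans
      (ih fun v hv => h v (Multiset.mem_cons_of_mem hv))

/-- The unit vectors to be removed from `p`: for each label `i ∈ s`, as many copies of `e_i` as
`tot_i(p)` exceeds two. The truncated subtraction of natural numbers stands for
`max (0, tot_i(p) - 2)`. -/
def surplus (p : Multiset (Fin (k + 1) → ℕ)) (s : Finset (Fin (k + 1))) :
    Multiset (Fin (k + 1) → ℕ) :=
  s.val.bind fun i => Multiset.replicate (tot p i - 2) (unitVec k i)

theorem mem_surplus {p : Multiset (Fin (k + 1) → ℕ)} {s : Finset (Fin (k + 1))}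
    {v : Fin (k + 1) → ℕ} : v ∈ surplus p s ↔ ∃ i ∈ s, 2 < tot p i ∧ v = unitVec k i := by
  simp [surplus, Multiset.mem_bind, Multiset.mem_replicate, Nat.sub_ne_zero_iff_lt]

theorem tot_surplus (p : Multiset (Fin (k + 1) → ℕ)) {s : Finset (Fin (k + 1))} {i : Fin (k + 1)}
    (hi : i ∈ s) : tot (surplus p s) i = tot p i - 2 := by
  have hsum : tot (surplus p s) i = ∑ j ∈ s, (tot p j - 2) * unitVec k j i := by
    rw [tot, surplus, Multiset.map_bind, Multiset.sum_bind]
    simp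
  rw [hsum]
  simp [unitVec, hi]

theorem two_le_tot_sub_surplus {p : Multiset (Fin (k + 1) → ℕ)} {s : Finset (Fin (k + 1))}
    {i : Fin (k + 1)} (hi : i ∈ s) (htot : 2 ≤ tot p i) : 2 ≤ tot (p - surplus p s) i := by
  have hle : tot p i ≤ tot (p - surplus p s) i + (tot p i - 2) :=
    calc tot p i ≤ tot (p - surplus p s + surplus p s) i := tot_mono le_tsub_add i
      _ = tot (p - surplus p s) i + (tot p i - 2) := by rw [tot_add, tot_surplus p hi]
  omega

theorem clean_pattern_equiv_general (p : Multiset (Fin (k + 1) → ℕ)) (s : Finset (Fin (k + 1))) :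
    EquivLF (canonForest k p) (canonForest k (p - surplus p s)) := by
  have hremoved : ∀ v ∈ p - (p - surplus p s),
      ∃ i, v = unitVec k i ∧ 2 ≤ tot (p - surplus p s) i := by
    intro v hv
    obtain ⟨i, hi, htot, rfl⟩ := mem_surplus.1 (Multiset.mem_of_le tsub_tsub_le hv)
    exact ⟨i, rfl, two_le_tot_sub_surplus hi htot.le⟩
  simpa only [tsub_add_cancel_of_le tsub_le_self] using equivLF_canonForest_unitVecs_add hremoved

end CanonForest

/-- Let `p` be a nice pattern (every vector different from its zero vector
`z` is a unit vector `e_i` with `i ∈ {1,…,k}`), and let `p'` be obtained from `p` by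
reducing, for each `i ∈ {1,…,k}`, the multiplicity of `e_i` by `max (0, tot_i(p) - 2)`.
Then the canonical forests of `p` and `p'` are equivalent. -/
theorem clean_pattern_equiv {k : ℕ} (p : Multiset (Fin (k + 1) → ℕ))
    (hp : IsPattern k p) (z : Fin (k + 1) → ℕ)
    (hzmem : z ∈ p) (hz0 : z 0 = 1) (hzcount : p.count z = 1)
    (hnice : ∀ v ∈ p, v ≠ z → ∃ i : Fin (k + 1), i ≠ 0 ∧ v = unitVec k i)
    (p' : Multiset (Fin (k + 1) → ℕ))
    (hp' : p' = p - ((Finset.univ.filter fun i : Fin (k + 1) => i ≠ 0).val.bind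
      fun i => Multiset.replicate (tot p i - 2) (unitVec k i))) :
    EquivLF (canonForest k p) (canonForest k p') := by
  subst hp'
  exact clean_pattern_equiv_general p _
end

section
/- Let G be a finite simple graph on a nonempty vertex set V, let t ∈ ℕ, and assume that G contains a feedback vertex set of size t. Set W = 2|V| and choose a weight w(v) ∈ {1,…,W} independently and uniformly at random for each v ∈ V. Then with probability at least 1/2 there is a unique minimum-weight feedback vertex set of size t in G, i.e., a unique set S of size t among all feedback vertex sets of size t minimizing Σ_{v ∈ S} w(v). -/
/-- A feedback vertex set of a graph: a set of vertices whose removal leaves an acyclic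
graph. -/
def IsFVS {V : Type} (G : SimpleGraph V) (S : Finset V) : Prop :=
  (G.induce {v | v ∉ S}).IsAcyclic

/-!
This is the isolation lemma of Mulmuley, Vazirani and Vazirani, valid for any nonempty family of
subsets of `V`. If the minimum is attained twice, some vertex `v` belongs to one minimizer but not
to another. Fix the weights away from `v`: the minimum over the sets avoiding `v` is then a
constant, the minimum over the sets containing `v` is a constant plus the weight of `v`, and a tie
forces this weight to a single value. So `v` is ambiguous with probability at most `1 / W`, where
`W` is the number of available weights, and the union bound over `V` gives a failure probability
of at most `|V| / W`.
-/

section MinWeight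

variable {V M : Type*} [AddCommMonoid M] [LinearOrder M]

/-- `S` has minimum `w`-weight among the members of the set family `{S | P S}`. -/
def IsMinWeight (P : Finset V → Prop) (w : V → M) (S : Finset V) : Prop :=
  P S ∧ ∀ T, P T → ∑ v ∈ S, w v ≤ ∑ v ∈ T, w v

/-- The element `v` is ambiguous for the weights `w`: it distinguishes two minimum-weight members
of the set family `{S | P S}`. Such elements are the obstruction to a unique minimizer. -/
def IsAmbiguous (P : Finset V → Prop) (w : V → M) (v : V) : Prop :=
  ∃ S T, IsMinWeight P w S ∧ IsMinWeight P w T ∧ v ∈ S ∧ v ∉ T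

variable {P : Finset V → Prop} {w w' : V → M} {v : V}

theorem exists_isMinWeight [Finite V] (hP : ∃ S, P S) (w : V → M) : ∃ S, IsMinWeight P w S :=
  Set.exists_min_image {S | P S} (fun S => ∑ v ∈ S, w v) (Set.toFinite _) hP

theorem exists_isAmbiguous_of_not_existsUnique [Finite V] (hP : ∃ S, P S)
    (hw : ¬∃! S, IsMinWeight P w S) : ∃ v, IsAmbiguous P w v := by
  obtain ⟨S, hS⟩ := exists_isMinWeight hP w
  obtain ⟨T, hT, hne⟩ : ∃ T, IsMinWeight P w T ∧ T ≠ S := by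
    by_contra! h
    exact hw ⟨S, hS, h⟩
  classical
  obtain ⟨v, hv⟩ := Finset.symmDiff_nonempty.2 hne
  rcases Finset.mem_symmDiff.1 hv with ⟨hvT, hvS⟩ | ⟨hvS, hvT⟩
  · exact ⟨v, T, S, hT, hS, hvT, hvS⟩
  · exact ⟨v, S, T, hS, hT, hvS, hvT⟩

namespace IsAmbiguous

variable [IsOrderedCancelAddMonoid M]

theorem le_of_eqOn_compl (h : IsAmbiguous P w v) (h' : IsAmbiguous P w' v)
    (hw : Set.EqOn w w' {v}ᶜ) : w' v ≤ w v := by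
  classical
  obtain ⟨-, T, -, hT, -, hvT⟩ := h
  obtain ⟨S, -, hS, -, hvS, -⟩ := h'
  have weight_T : ∑ u ∈ T, w' u = ∑ u ∈ T, w u :=
    Finset.sum_congr rfl fun u hu => (hw (ne_of_mem_of_not_mem hu hvT)).symm
  have weight_erase : ∑ u ∈ S.erase v, w' u = ∑ u ∈ S.erase v, w u :=
    Finset.sum_congr rfl fun u hu => (hw (Finset.ne_of_mem_erase hu)).symm
  have weight_S : w' v + ∑ u ∈ S.erase v, w u ≤ w v + ∑ u ∈ S.erase v, w u :=
    calc w' v + ∑ u ∈ S.erase v, w u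
        = ∑ u ∈ S, w' u := by rw [← weight_erase, Finset.add_sum_erase S w' hvS]
      _ ≤ ∑ u ∈ T, w' u := hS.2 T hT.1
      _ = ∑ u ∈ T, w u := weight_T
      _ ≤ ∑ u ∈ S, w u := hT.2 S hS.1
      _ = w v + ∑ u ∈ S.erase v, w u := (Finset.add_sum_erase S w hvS).symm
  exact le_of_add_le_add_right weight_S

theorem eq_of_eqOn_compl (h : IsAmbiguous P w v) (h' : IsAmbiguous P w' v)
    (hw : Set.EqOn w w' {v}ᶜ) : w = w' := by
  funext u
  rcases eq_or_ne u v with rfl | hu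
  · exact (h'.le_of_eqOn_compl h hw.symm).antisymm (h.le_of_eqOn_compl h' hw)
  · exact hw hu

end IsAmbiguous

end MinWeight

section Isolation

variable {V α M : Type*} [Fintype V] [Fintype α] [AddCommMonoid M] [LinearOrder M]
  [IsOrderedCancelAddMonoid M] {P : Finset V → Prop} {c : α → M}

open scoped Classical in
theorem card_filter_isAmbiguous_le (hc : c.Injective) (P : Finset V → Prop) (v : V) :
    (Finset.univ.filter fun f : V → α => IsAmbiguous P (c ∘ f) v).card
      ≤ Fintype.card α ^ (Fintype.card V - 1) := by
  have card_restrict :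
      Fintype.card ({u // u ≠ v} → α) = Fintype.card α ^ (Fintype.card V - 1) := by
    rw [Fintype.card_fun, Fintype.card_subtype_compl, Fintype.card_subtype_eq]
  rw [← card_restrict, ← Finset.card_univ]
  refine Finset.card_le_card_of_injOn (fun f u => f u) (fun _ _ => Finset.mem_univ _) ?_
  intro f hf g hg hfg
  have hf : IsAmbiguous P (c ∘ f) v := by simpa using hf
  have hg : IsAmbiguous P (c ∘ g) v := by simpa using hg
  have eq_off : Set.EqOn (c ∘ f) (c ∘ g) {v}ᶜ := fun u hu => congrArg c (congrFun hfg ⟨u, hu⟩)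
  exact hc.comp_left (hf.eq_of_eqOn_compl hg eq_off)

open scoped Classical in
theorem card_filter_not_existsUnique_isMinWeight_le (hc : c.Injective) (hP : ∃ S, P S) :
    (Finset.univ.filter fun f : V → α => ¬∃! S, IsMinWeight P (c ∘ f) S).card
      ≤ Fintype.card V * Fintype.card α ^ (Fintype.card V - 1) := by
  let ambiguous (v : V) : Finset (V → α) := {f | IsAmbiguous P (c ∘ f) v}
  have subset_union : (Finset.univ.filter fun f : V → α => ¬∃! S, IsMinWeight P (c ∘ f) S)
      ⊆ Finset.univ.biUnion ambiguous := by
    intro f hf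
    simpa [ambiguous] using exists_isAmbiguous_of_not_existsUnique hP (Finset.mem_filter.1 hf).2
  exact (Finset.card_le_card subset_union).trans <|
    Finset.card_biUnion_le_card_mul _ _ _ fun v _ => card_filter_isAmbiguous_le hc P v

open scoped Classical in
theorem card_filter_not_existsUnique_isMinWeight_div_le [Nonempty α] (hc : c.Injective)
    (hP : ∃ S, P S) :
    ((Finset.univ.filter fun f : V → α => ¬∃! S, IsMinWeight P (c ∘ f) S).card : ℚ) /
        Fintype.card (V → α) ≤ Fintype.card V / Fintype.card α := by
  rw [div_le_div_iff₀ (by exact_mod_cast Fintype.card_pos) (by exact_mod_cast Fintype.card_pos)]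
  norm_cast
  calc _ ≤ Fintype.card V * Fintype.card α ^ (Fintype.card V - 1) * Fintype.card α :=
        Nat.mul_le_mul_right _ (card_filter_not_existsUnique_isMinWeight_le hc hP)
    _ = Fintype.card V * Fintype.card (V → α) := by
        rw [Fintype.card_fun]
        rcases eq_or_ne (Fintype.card V) 0 with hV | hV
        · simp [hV]
        · rw [mul_assoc, pow_sub_one_mul hV]

open scoped Classical in
/-- The random labelling `f` is uniform on `V → α`, and `c` turns its labels into weights. -/
theorem unique_min_weight_fvs_general [Nonempty α] (hc : c.Injective) (hP : ∃ S, P S) :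
    1 - (Fintype.card V : ℚ) / Fintype.card α ≤
      ((Finset.univ.filter fun f : V → α => ∃! S, IsMinWeight P (c ∘ f) S).card : ℚ) /
        Fintype.card (V → α) := by
  set good := Finset.univ.filter fun f : V → α => ∃! S, IsMinWeight P (c ∘ f) S
  set bad := Finset.univ.filter fun f : V → α => ¬∃! S, IsMinWeight P (c ∘ f) S
  have good_add_bad : (good.card : ℚ) + bad.card = Fintype.card (V → α) := by
    exact_mod_cast Finset.card_filter_add_card_filter_not _
  have card_ne_zero : (Fintype.card (V → α) : ℚ) ≠ 0 := by exact_mod_cast Fintype.card_ne_zero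
  calc 1 - (Fintype.card V : ℚ) / Fintype.card α
      ≤ 1 - (bad.card : ℚ) / Fintype.card (V → α) :=
        sub_le_sub_left (card_filter_not_existsUnique_isMinWeight_div_le hc hP) 1
    _ = good.card / Fintype.card (V → α) := by
        rw [one_sub_div card_ne_zero, ← good_add_bad, add_sub_cancel_right]

end Isolation

open scoped Classical in
/-- Let `G` be a finite simple graph on a nonempty vertex set `V`
containing a feedback vertex set of size `t`. Choose weights `w(v) ∈ {1,…,2|V|}` (encoded
as `w : V → Fin (2|V|)` with weight `(w v).val + 1`) independently and uniformly at random.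
Then with probability at least `1/2` there is a unique minimum-weight feedback vertex set
of size `t` in `G`. -/
theorem unique_min_weight_fvs {V : Type} [Fintype V] [Nonempty V] (G : SimpleGraph V)
    (t : ℕ) (hex : ∃ S : Finset V, S.card = t ∧ IsFVS G S) :
    (1 : ℚ) / 2 ≤
      ((Finset.univ.filter fun w : V → Fin (2 * Fintype.card V) =>
          ∃! S : Finset V, (S.card = t ∧ IsFVS G S) ∧
            ∀ T : Finset V, T.card = t ∧ IsFVS G T →
              (∑ v ∈ S, ((w v : ℕ) + 1)) ≤ ∑ v ∈ T, ((w v : ℕ) + 1)).card : ℚ) /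
        (Fintype.card (V → Fin (2 * Fintype.card V)) : ℚ) := by
  have isolation := unique_min_weight_fvs_general (V := V)
    ((add_left_injective 1).comp (Fin.val_injective (n := 2 * Fintype.card V))) hex
  simp only [IsMinWeight, Function.comp_apply, Fintype.card_fin] at isolation
  have half_eq : (1 : ℚ) / 2 = 1 - Fintype.card V / (2 * Fintype.card V : ℕ) := by
    push_cast
    field_simp
    norm_num
  exact half_eq.trans_le isolation
end
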